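/- Let ‖·‖ be a norm on ℝ^p with polytope unit ball. The set of matrices X ∈ ℝ^{n×p} for which there exists y ∈ ℝ^n with a non-unique minimizer of b ↦ (1/2)‖y − Xb‖₂² + ‖b‖ has Lebesgue measure zero in ℝ^{n×p}. -/

import Mathlib

open Finset Matrix MeasureTheory

structure IsNorm {p : ℕ} (N : (Fin p → ℝ) → ℝ) : Prop where
  nonneg : ∀ x, 0 ≤ N x
  eq_zero_iff : ∀ x, N x = 0 ↔ x = 0
  smul : ∀ (c : ℝ) (x), N (c • x) = |c| * N x
  triangle : ∀ x y, N (x + y) ≤ N x + N y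

noncomputable def obj {n p : ℕ} (X : Matrix (Fin n) (Fin p) ℝ) (N : (Fin p → ℝ) → ℝ)
    (y : Fin n → ℝ) (b : Fin p → ℝ) : ℝ :=
  (1/2) * ∑ i, (y i - X.mulVec b i)^2 + N b

lemma null_dependent {n p m : ℕ} (w : Fin m → (Fin p → ℝ)) (hw : LinearIndependent ℝ w)
    (hm : m ≤ n) :
    volume {X : Fin n → Fin p → ℝ |
      ¬ LinearIndependent ℝ (fun j => Matrix.mulVec (Matrix.of X) (w j))} = 0 := by
  classical
  let D : (Fin n → Fin p → ℝ) → Matrix (Fin m) (Fin m) ℝ :=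
    fun X => Matrix.of fun i j => Matrix.mulVec (Matrix.of X) (w j) (Fin.castLE hm i)
  have hD : Continuous D := by
    refine continuous_matrix fun i j => ?_
    simp only [D, Matrix.of_apply, Matrix.mulVec, dotProduct]
    fun_prop
  -- a matrix sending `w j` to `e j`
  obtain ⟨X0, hX0⟩ : ∃ X0 : Fin n → Fin p → ℝ, D X0 = 1 := by
    let B := Module.Basis.sumExtend hw
    let L : (Fin p → ℝ) →ₗ[ℝ] (Fin n → ℝ) :=
      B.constr ℝ (Sum.elim (fun j => Pi.single (Fin.castLE hm j) (1 : ℝ)) (fun _ => 0))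
    have hB : ∀ j, B (Sum.inl j) = w j := by
      intro j
      simp [B, Module.Basis.sumExtend]
      rfl
    have hL : ∀ j, L (w j) = Pi.single (Fin.castLE hm j) (1 : ℝ) := by
      intro j
      rw [← hB j]
      simp [L]
    refine ⟨fun i j => LinearMap.toMatrix' L i j, ?_⟩
    ext i j
    have : Matrix.mulVec (Matrix.of fun i j => LinearMap.toMatrix' L i j) (w j) = L (w j) :=
      LinearMap.toMatrix'_mulVec L (w j)
    simp only [D, Matrix.of_apply]
    rw [this, hL, Matrix.one_apply, Pi.single_apply]
    simp [Fin.ext_iff]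
  have hadd : ∀ X (t : ℝ), D (X + t • X0) = D X + t • D X0 := by
    intro X t
    ext i j
    have : Matrix.of (X + t • X0) = Matrix.of X + t • Matrix.of X0 := rfl
    simp only [D, Matrix.of_apply, this, Matrix.add_mulVec, Matrix.smul_mulVec, Matrix.add_apply,
      Matrix.smul_apply, Pi.add_apply, Pi.smul_apply]
  let L : ℝ →ₗ[ℝ] (Fin n → Fin p → ℝ) := LinearMap.toSpanSingleton ℝ _ X0
  have key : ∀ᵐ X : Fin n → Fin p → ℝ, X ∈ {X | (D X).det ≠ 0} := by
    refine ae_mem_of_ae_add_linearMap_mem L volume volume ?_ ?_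
    · exact (isOpen_ne_fun hD.matrix_det continuous_const).measurableSet
    · intro X
      have hfin : {t : ℝ | (-(D X)).charpoly.eval t = 0}.Finite := by
        have := Polynomial.finite_setOfPred_isRoot (Matrix.charpoly_monic (-(D X))).ne_zero
        exact this
      have := hfin.measure_zero volume
      rw [ae_iff]
      refine measure_mono_null ?_ this
      intro t ht
      simp only [Set.mem_ofPred_eq, not_not, ne_eq] at ht ⊢
      rw [Matrix.eval_charpoly, ← ht]
      congr 1
      simp only [L, LinearMap.toSpanSingleton_apply, hadd, hX0]
      rw [sub_neg_eq_add, add_comm]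
      congr 1
      ext i j
      simp [Matrix.one_apply, Matrix.scalar_apply, Matrix.diagonal_apply]
  rw [ae_iff] at key
  refine measure_mono_null ?_ key
  intro X hX hdet
  apply hX
  have h1 : LinearIndependent ℝ (D X).col := by
    rw [Matrix.linearIndependent_cols_iff_isUnit, Matrix.isUnit_iff_isUnit_det]
    exact isUnit_iff_ne_zero.mpr hdet
  refine LinearIndependent.of_comp (LinearMap.funLeft ℝ ℝ (Fin.castLE hm)) ?_
  exact h1

lemma obj_eq {n p : ℕ} (X : Matrix (Fin n) (Fin p) ℝ) (N : (Fin p → ℝ) → ℝ)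
    (y : Fin n → ℝ) (b : Fin p → ℝ) :
    obj X N y b = (1/2) * ((y - X.mulVec b) ⬝ᵥ (y - X.mulVec b)) + N b := by
  simp only [obj, dotProduct, Pi.sub_apply, pow_two]

lemma obj_shift {n p : ℕ} (X : Matrix (Fin n) (Fin p) ℝ) (N : (Fin p → ℝ) → ℝ)
    (y : Fin n → ℝ) (b d : Fin p → ℝ) (t : ℝ) :
    obj X N y (b + t • d) = (1/2) * ((y - X.mulVec b) ⬝ᵥ (y - X.mulVec b))
      - t * ((y - X.mulVec b) ⬝ᵥ X.mulVec d)
      + t ^ 2 / 2 * (X.mulVec d ⬝ᵥ X.mulVec d) + N (b + t • d) := by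
  rw [obj_eq, Matrix.mulVec_add, Matrix.mulVec_smul, ← sub_sub]
  generalize y - X.mulVec b = r
  generalize X.mulVec d = q
  rw [sub_dotProduct, dotProduct_sub, dotProduct_sub, dotProduct_comm (t • q) r]
  simp only [dotProduct_smul, smul_dotProduct, smul_eq_mul]
  ring

lemma first_order {n p : ℕ} (X : Matrix (Fin n) (Fin p) ℝ) (N : (Fin p → ℝ) → ℝ)
    (hN : IsNorm N) (y : Fin n → ℝ) (β : Fin p → ℝ) (hmin : ∀ b, obj X N y β ≤ obj X N y b)
    (d : Fin p → ℝ) :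
    (y - X.mulVec β) ⬝ᵥ X.mulVec d ≤ N (β + d) - N β := by
  set A := (y - X.mulVec β) ⬝ᵥ X.mulVec d with hA
  set Q := X.mulVec d ⬝ᵥ X.mulVec d with hQ
  have h : ∀ t : ℝ, 0 < t → t ≤ 1 → A ≤ N (β + d) - N β + t / 2 * Q := by
    intro t ht ht1
    have h1 := hmin (β + t • d)
    rw [obj_shift, obj_eq] at h1
    have h2 : N (β + t • d) ≤ (1 - t) * N β + t * N (β + d) := by
      have e : β + t • d = (1 - t) • β + t • (β + d) := by
        ext i; simp; ring
      rw [e]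
      refine (hN.triangle _ _).trans ?_
      rw [hN.smul, hN.smul, abs_of_nonneg (by linarith : (0 : ℝ) ≤ 1 - t), abs_of_pos ht]
    have h3 : t * A ≤ t * (N (β + d) - N β + t / 2 * Q) := by
      rw [← hA, ← hQ] at h1
      nlinarith
    exact le_of_mul_le_mul_left h3 ht
  have hQ0 : 0 ≤ Q := by
    rw [hQ]; simp only [dotProduct]; exact Finset.sum_nonneg fun i _ => mul_self_nonneg _
  by_contra hc
  push Not at hc
  have h1 := h (min 1 ((A - (N (β + d) - N β)) / (Q + 1)))
    (lt_min one_pos (div_pos (by linarith) (by linarith))) (min_le_left _ _)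
  have h2 : min 1 ((A - (N (β + d) - N β)) / (Q + 1)) * (Q + 1) ≤ A - (N (β + d) - N β) := by
    refine (mul_le_mul_of_nonneg_right (min_le_right _ _) (by linarith)).trans ?_
    rw [div_mul_cancel₀]
    linarith
  have h3 : 0 < min 1 ((A - (N (β + d) - N β)) / (Q + 1)) :=
    lt_min one_pos (div_pos (by linarith) (by linarith))
  nlinarith

lemma norm_eq {n p : ℕ} (X : Matrix (Fin n) (Fin p) ℝ) (N : (Fin p → ℝ) → ℝ)
    (hN : IsNorm N) (y : Fin n → ℝ) (β : Fin p → ℝ) (hmin : ∀ b, obj X N y β ≤ obj X N y b) :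
    (y - X.mulVec β) ⬝ᵥ X.mulVec β = N β := by
  have h1 := first_order X N hN y β hmin β
  have h2 := first_order X N hN y β hmin (-β)
  have e : β + β = (2 : ℝ) • β := by rw [two_smul]
  rw [e, hN.smul] at h1
  rw [add_neg_cancel, (hN.eq_zero_iff 0).mpr rfl, Matrix.mulVec_neg, dotProduct_neg] at h2
  rw [abs_of_pos (by norm_num : (0 : ℝ) < 2)] at h1
  linarith

lemma fit_eq {n p : ℕ} (X : Matrix (Fin n) (Fin p) ℝ) (N : (Fin p → ℝ) → ℝ)
    (hN : IsNorm N) (y : Fin n → ℝ) (β₁ β₂ : Fin p → ℝ)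
    (h₁ : ∀ b, obj X N y β₁ ≤ obj X N y b) (h₂ : ∀ b, obj X N y β₂ ≤ obj X N y b) :
    X.mulVec (β₂ - β₁) = 0 := by
  have a1 := first_order X N hN y β₁ h₁ (β₂ - β₁)
  have a2 := first_order X N hN y β₂ h₂ (β₁ - β₂)
  rw [add_sub_cancel] at a1 a2
  have e1 : X.mulVec (β₁ - β₂) = - X.mulVec (β₂ - β₁) := by
    rw [← Matrix.mulVec_neg, neg_sub]
  have e2 : y - X.mulVec β₂ = (y - X.mulVec β₁) - X.mulVec (β₂ - β₁) := by
    rw [Matrix.mulVec_sub]; abel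
  rw [e1, e2, dotProduct_neg, sub_dotProduct] at a2
  rw [← dotProduct_self_eq_zero]
  refine le_antisymm (by linarith) ?_
  simp only [dotProduct]; exact Finset.sum_nonneg fun i _ => mul_self_nonneg _

lemma mem_span_face {p k : ℕ} (N : (Fin p → ℝ) → ℝ) (hN : IsNorm N)
    (V : Fin k → (Fin p → ℝ)) (hB : {x | N x ≤ 1} = convexHull ℝ (Set.range V))
    (φ : (Fin p → ℝ) →ₗ[ℝ] ℝ) (hφ : ∀ b, φ b ≤ N b) (β : Fin p → ℝ) (hβ : φ β = N β) :
    β ∈ Submodule.span ℝ {v | v ∈ Set.range V ∧ φ v = 1} := by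
  rcases (hN.nonneg β).eq_or_lt with h0 | hpos
  · rw [(hN.eq_zero_iff β).mp h0.symm]
    exact Submodule.zero_mem _
  have hmem : (N β)⁻¹ • β ∈ convexHull ℝ (Set.range V) := by
    rw [← hB]
    simp only [Set.mem_ofPred_eq]
    rw [hN.smul, abs_of_pos (inv_pos.mpr hpos), inv_mul_cancel₀ hpos.ne']
  have hV : ∀ v ∈ Set.range V, φ v ≤ 1 := by
    intro v hv
    have : v ∈ {x | N x ≤ 1} := by rw [hB]; exact subset_convexHull ℝ _ hv
    exact (hφ v).trans this
  obtain ⟨ι, _, w, z, hw, hw1, hz, hsum⟩ := mem_convexHull_iff_exists_fintype.mp hmem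
  have hval : ∑ i, w i * φ (z i) = ∑ i, w i := by
    rw [hw1]
    have := congrArg φ hsum
    rw [map_sum] at this
    simp only [map_smul, smul_eq_mul, hβ] at this
    rw [this, inv_mul_cancel₀ hpos.ne']
  have heq := (Finset.sum_eq_sum_iff_of_le (fun i _ =>
    mul_le_of_le_one_right (hw i) (hV _ (hz i)))).mp hval
  have hb : β = N β • ((N β)⁻¹ • β) := by
    rw [smul_smul, mul_inv_cancel₀ hpos.ne', one_smul]
  rw [hb, ← hsum]
  refine Submodule.smul_mem _ _ (Submodule.sum_mem _ fun i _ => ?_)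
  by_cases hwi : w i = 0
  · rw [hwi, zero_smul]; exact Submodule.zero_mem _
  · refine Submodule.smul_mem _ _ (Submodule.subset_span ⟨hz i, ?_⟩)
    have := heq i (Finset.mem_univ i)
    exact mul_left_cancel₀ hwi (by rw [this, mul_one])

lemma diff_indep {E : Type*} [AddCommGroup E] [Module ℝ E] {n : ℕ} (v : Fin (n + 1) → E)
    (hv : LinearIndependent ℝ v) : LinearIndependent ℝ (fun j : Fin n => v j.succ - v 0) := by
  rw [Fintype.linearIndependent_iff] at hv ⊢
  intro g hg j
  have := hv (Fin.cons (-∑ i, g i) g) (by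
    rw [Fin.sum_univ_succ]
    simp only [Fin.cons_zero, Fin.cons_succ, smul_sub, Finset.sum_sub_distrib] at hg ⊢
    rw [neg_smul, Finset.sum_smul, ← hg]
    abel) j.succ
  simpa using this

theorem nonuniqueness_set_null {n p k : ℕ} (N : (Fin p → ℝ) → ℝ) (hN : IsNorm N)
    (V : Fin k → (Fin p → ℝ)) (hB : {x | N x ≤ 1} = convexHull ℝ (Set.range V)) :
    volume {X : Fin n → Fin p → ℝ |
      ∃ (y : Fin n → ℝ) (β₁ β₂ : Fin p → ℝ), β₁ ≠ β₂ ∧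
        (∀ b, obj (Matrix.of X) N y β₁ ≤ obj (Matrix.of X) N y b) ∧
        (∀ b, obj (Matrix.of X) N y β₂ ≤ obj (Matrix.of X) N y b)} = 0 := by
  classical
  set S1 : Set (Fin n → Fin p → ℝ) := ⋃ m : ℕ, ⋃ f : Fin m → Fin k,
    {X | m ≤ n ∧ LinearIndependent ℝ (V ∘ f) ∧
      ¬ LinearIndependent ℝ (fun j => Matrix.mulVec (Matrix.of X) (V (f j)))} with hS1
  set S2 : Set (Fin n → Fin p → ℝ) := ⋃ f : Fin (n + 1) → Fin k,
    {X | LinearIndependent ℝ (V ∘ f) ∧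
      ¬ LinearIndependent ℝ (fun j : Fin n =>
        Matrix.mulVec (Matrix.of X) (V (f j.succ) - V (f 0)))} with hS2
  have n1 : volume S1 = 0 := by
    refine measure_iUnion_null fun m => measure_iUnion_null fun f => ?_
    by_cases h : m ≤ n ∧ LinearIndependent ℝ (V ∘ f)
    · exact measure_mono_null (fun X hX => hX.2.2) (null_dependent (V ∘ f) h.2 h.1)
    · convert measure_empty (μ := volume)
      ext X
      simp only [Set.mem_ofPred_eq, Set.mem_empty_iff_false, iff_false]
      exact fun hX => h ⟨hX.1, hX.2.1⟩
  have n2 : volume S2 = 0 := by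
    refine measure_iUnion_null fun f => ?_
    by_cases h : LinearIndependent ℝ (V ∘ f)
    · exact measure_mono_null (fun X hX => hX.2) (null_dependent _ (diff_indep _ h) le_rfl)
    · convert measure_empty (μ := volume)
      ext X
      simp only [Set.mem_ofPred_eq, Set.mem_empty_iff_false, iff_false]
      exact fun hX => h hX.1
  refine measure_mono_null ?_ (measure_union_null n1 n2)
  rintro X ⟨y, β₁, β₂, hne, h₁, h₂⟩
  have hd := fit_eq _ N hN y β₁ β₂ h₁ h₂
  have hXe : (Matrix.of X).mulVec β₂ = (Matrix.of X).mulVec β₁ := by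
    rw [Matrix.mulVec_sub] at hd; exact sub_eq_zero.mp hd
  set r := y - (Matrix.of X).mulVec β₁ with hr
  have e1 := norm_eq _ N hN y β₁ h₁
  have e2 := norm_eq _ N hN y β₂ h₂
  rw [hXe] at e2
  rw [← hr] at e1 e2
  let φ : (Fin p → ℝ) →ₗ[ℝ] ℝ :=
    { toFun := fun b => r ⬝ᵥ (Matrix.of X).mulVec b
      map_add' := fun a b => by rw [Matrix.mulVec_add, dotProduct_add]
      map_smul' := fun c b => by
        rw [Matrix.mulVec_smul, dotProduct_smul]; rfl }
  have hφa : ∀ b, φ b = r ⬝ᵥ (Matrix.of X).mulVec b := fun _ => rfl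
  have hφ : ∀ b, φ b ≤ N b := by
    intro b
    have := first_order _ N hN y β₁ h₁ (b - β₁)
    rw [add_sub_cancel, Matrix.mulVec_sub, ← hr, dotProduct_sub, e1] at this
    rw [hφa]; linarith
  have m1 := mem_span_face N hN V hB φ hφ β₁ (by rw [hφa, e1])
  have m2 := mem_span_face N hN V hB φ hφ β₂ (by rw [hφa, hXe, e2])
  have md := Submodule.sub_mem _ m2 m1
  have hd0 : β₂ - β₁ ≠ 0 := sub_ne_zero.mpr hne.symm
  generalize β₂ - β₁ = d at hd md hd0
  obtain ⟨b, hbS, hspan, hli⟩ := exists_linearIndependent ℝ {v | v ∈ Set.range V ∧ φ v = 1}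
  rw [← hspan] at md
  have hfin : b.Finite := (Set.finite_range V).subset fun v hv => (hbS hv).1
  have := hfin.fintype
  obtain ⟨m, ⟨g⟩⟩ : ∃ m : ℕ, Nonempty (Fin m ≃ b) := ⟨_, ⟨(Fintype.equivFin b).symm⟩⟩
  have hg : ∀ j, ∃ i, V i = (g j : Fin p → ℝ) := fun j => (hbS (g j).2).1
  choose f hf using hg
  have hVf : V ∘ f = (Subtype.val : b → _) ∘ g := by
    ext1 j; exact hf j
  have hlif : LinearIndependent ℝ (V ∘ f) := by
    rw [hVf]; exact hli.comp _ g.injective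
  have hrange : Set.range (V ∘ f) = b := by
    rw [hVf, g.surjective.range_comp, Subtype.range_coe]
  have hone : ∀ j, φ (V (f j)) = 1 := by
    intro j; rw [hf]; exact (hbS (g j).2).2
  rw [← hrange] at md
  obtain ⟨c, hc⟩ := (Submodule.mem_span_range_iff_exists_fun ℝ).mp md
  rcases Nat.lt_or_ge n m with hm | hm
  · right
    refine Set.mem_iUnion.mpr ⟨f ∘ Fin.castLE hm, ?_, ?_⟩
    · exact hlif.comp _ (Fin.castLE_injective hm)
    · intro hind
      have htop := hind.span_eq_top_of_card_eq_finrank' (by simp)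
      have hmem : r ∈ Submodule.span ℝ (Set.range fun j : Fin n =>
        Matrix.mulVec (Matrix.of X) (V ((f ∘ Fin.castLE hm) j.succ) -
          V ((f ∘ Fin.castLE hm) 0))) := by rw [htop]; trivial
      obtain ⟨a, ha⟩ := (Submodule.mem_span_range_iff_exists_fun ℝ).mp hmem
      have hrr : r ⬝ᵥ r = 0 := by
        nth_rewrite 2 [← ha]
        rw [dotProduct_sum]
        refine Finset.sum_eq_zero fun j _ => ?_
        rw [dotProduct_smul, ← hφa, map_sub]
        simp only [Function.comp_apply, hone, sub_self, smul_zero]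
      rw [dotProduct_self_eq_zero] at hrr
      have := hone ⟨0, by omega⟩
      rw [hφa, hrr, zero_dotProduct] at this
      exact zero_ne_one this
  · left
    refine Set.mem_iUnion.mpr ⟨m, Set.mem_iUnion.mpr ⟨f, hm, hlif, ?_⟩⟩
    intro hind
    rw [Fintype.linearIndependent_iff] at hind
    have hc0 := hind c (by
      rw [← hd, ← hc]
      have := map_sum (Matrix.mulVecLin (Matrix.of X)) (fun i => c i • (V ∘ f) i) Finset.univ
      simp only [Matrix.mulVecLin_apply, Matrix.mulVec_smul] at this
      rw [this]; rfl)
    apply hd0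
    rw [← hc]
    exact Finset.sum_eq_zero fun i _ => by rw [hc0 i, zero_smul]
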